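/- Suppose max{k, 2} ≤ m ≤ ⌊n/2⌋ and k ≥ 1. Then m(K^k_{n-m,m}, t) ≤ m(K^k_{n-1,1}, t) for all t = 0, 1, …, ⌊n/2⌋, and m(K^k_{n-m,m}, 1) < m(K^k_{n-1,1}, 1); that is, K^k_{n-m,m} ≺ K^k_{n-1,1} in the matching quasi-order. -/

import Mathlib

/-- `matchCount G t` is the number of `t`-matchings of `G`, i.e. the number of
`t`-element sets of pairwise disjoint edges of `G`. -/
noncomputable def matchCount {V : Type*} (G : SimpleGraph V) (t : ℕ) : ℕ :=
  Nat.card {s : Finset (Sym2 V) // ↑s ⊆ G.edgeSet ∧ s.card = t ∧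
    (s : Set (Sym2 V)).Pairwise fun e f => ∀ v, ¬(v ∈ e ∧ v ∈ f)}

/-- The edge connectivity of a graph: the minimum number of edges whose
deletion disconnects the graph. -/
noncomputable def edgeConn {V : Type*} (G : SimpleGraph V) : ℕ :=
  sInf {j | ∃ F : Set (Sym2 V), F ⊆ G.edgeSet ∧ F.ncard = j ∧ ¬(G.deleteEdges F).Connected}

/-- The edge cut `∂(S)`: the set of edges of `G` with exactly one endpoint in `S`. -/
def edgeCut {V : Type*} (G : SimpleGraph V) (S : Set V) : Set (Sym2 V) :=
  {e | e ∈ G.edgeSet ∧ ∃ u ∈ S, ∃ v, v ∉ S ∧ e = s(u, v)}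

/-- `Kstar n k` is the graph `K^k_{n-1,1}`: obtained from `K_1 ∪ K_{n-1}` by adding
`k` edges joining the vertex of `K_1` (vertex `n-1`) to `k` distinct vertices of `K_{n-1}`. -/
def Kstar (n k : ℕ) : SimpleGraph (Fin n) :=
  SimpleGraph.fromRel (fun u v =>
    (u.val < n - 1 ∧ v.val < n - 1) ∨ (u.val < k ∧ v.val = n - 1))

/-- `Kmk n m k` is the graph `K^k_{n-m,m}`: obtained from `K_{n-m} ∪ K_m` by adding
`k` independent edges between the two parts. -/
def Kmk (n m k : ℕ) : SimpleGraph (Fin n) :=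
  SimpleGraph.fromRel (fun u v =>
    (u.val < n - m ∧ v.val < n - m) ∨ (n - m ≤ u.val ∧ n - m ≤ v.val) ∨
    (u.val < k ∧ v.val = n - m + u.val))

/-- The Hosoya index: the total number of matchings of `G`. -/
noncomputable def hosoya {V : Type*} [Fintype V] (G : SimpleGraph V) : ℕ :=
  ∑ t ∈ Finset.range (Fintype.card V / 2 + 1), matchCount G t

/-!
Let `G` be any graph on `n` vertices whose vertex set splits into two nontrivial parts joined by at
most `k` edges, `1 ≤ k < n`; then `G ≺ K^k_{n-1,1}`, and `K^k_{n-m,m}` is such a graph. Write `H_k`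
for `K^k_{n-1,1}`, with special vertex `c`.

The inequalities go by induction on `k`. Deleting a crossing edge `pq` from `G` loses the matchings
through `pq`, and deleting an edge `cp'` from `H_k` gives `H_{k-1}` and loses the matchings through
`cp'`. Any relabelling with `p ↦ p'` and `q ↦ c` sends the former matchings injectively to the
latter: the only vertex of `H_k` with missing edges is `c`, and it is already matched to `p'`.

If `uc` is the only crossing edge, with `c` the special vertex of `H_1` and `u` its neighbour, keep
a matching of `G` in which `c` is unmatched or matched to `u`. If `cw` is in the matching with
`w ≠ u`, apply the transposition `(u c)` when `u` is unmatched, and `(u w)` when it is matched. The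
crossing edges of the image reveal which transposition was used, so this is injective.

For `t = 1` the inequality is strict because a complete bipartite graph on two parts of sizes
`a, b ≥ 2` has `a * b > a + b - 1` edges.
-/

/-- The set of `t`-matchings of `G`, whose cardinality is `matchCount G t`. -/
def matchings {V : Type*} (G : SimpleGraph V) (t : ℕ) : Set (Finset (Sym2 V)) :=
  {s | ↑s ⊆ G.edgeSet ∧ s.card = t ∧
    (s : Set (Sym2 V)).Pairwise fun e f => ∀ v, ¬(v ∈ e ∧ v ∈ f)}

/-- The image of a set of edges under an injective relabelling of the vertices. -/
def mapVertices {V W : Type*} (f : V ↪ W) (s : Finset (Sym2 V)) : Finset (Sym2 W) :=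
  s.map f.sym2Map

/-- The graph obtained from the complete graph on the vertices other than `c` by joining `c` to
the vertices in `N`. For `c ∉ N` and `N.card = k` this is `K^k_{n-1,1}` up to isomorphism. -/
def attachVertex {V : Type*} (c : V) (N : Finset V) : SimpleGraph V where
  Adj a b := a ≠ b ∧ (a = c → b ∈ N) ∧ (b = c → a ∈ N)
  symm := ⟨fun _ _ h => ⟨h.1.symm, h.2.2, h.2.1⟩⟩
  loopless := ⟨fun _ h => h.1 rfl⟩

section Matchings

variable {V W : Type*} {G : SimpleGraph V} {H : SimpleGraph W} {t : ℕ} {s : Finset (Sym2 V)}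

theorem matchCount_eq_ncard_matchings (G : SimpleGraph V) (t : ℕ) :
    matchCount G t = (matchings G t).ncard := rfl

theorem adj_of_mem_matchings (hs : s ∈ matchings G t) {a b : V} (hab : s(a, b) ∈ s) :
    G.Adj a b :=
  hs.1 hab

theorem eq_of_mem_matchings (hs : s ∈ matchings G t) {a b b' : V} (hb : s(a, b) ∈ s)
    (hb' : s(a, b') ∈ s) : b = b' := by
  by_contra hne
  exact hs.2.2 hb hb' (fun h => hne (Sym2.congr_right.1 h)) a
    ⟨Sym2.mem_mk_left a b, Sym2.mem_mk_left a b'⟩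

theorem mk_mem_mapVertices (f : V ↪ W) {a b : V} : s(f a, f b) ∈ mapVertices f s ↔ s(a, b) ∈ s :=
  Finset.mem_map' (a := s(a, b)) f.sym2Map

theorem mk_mem_mapVertices_equiv (f : V ≃ W) {a b : W} :
    s(a, b) ∈ mapVertices f.toEmbedding s ↔ s(f.symm a, f.symm b) ∈ s := by
  simpa using mk_mem_mapVertices f.toEmbedding (a := f.symm a) (b := f.symm b) (s := s)

theorem mapVertices_injective (f : V ↪ W) : Function.Injective (mapVertices f) :=
  Finset.map_injective _

theorem mapVertices_mem_matchings (f : V ↪ W) (hs : s ∈ matchings G t)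
    (hH : ∀ a b, s(a, b) ∈ s → H.Adj (f a) (f b)) : mapVertices f s ∈ matchings H t := by
  refine ⟨?_, (Finset.card_map _).trans hs.2.1, ?_⟩
  · intro e' he'
    obtain ⟨e, he, rfl⟩ := Finset.mem_map.1 he'
    induction e with
    | h a b => exact hH a b he
  · rintro e' he' f' hf' hne w ⟨hwe, hwf⟩
    obtain ⟨e, he, rfl⟩ := Finset.mem_map.1 he'
    obtain ⟨e₂, he₂, rfl⟩ := Finset.mem_map.1 hf'
    obtain ⟨a, ha, rfl⟩ := Sym2.mem_map.1 hwe
    obtain ⟨b, hb, hab⟩ := Sym2.mem_map.1 hwf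
    exact hs.2.2 he he₂ (fun h => hne (congrArg _ h)) a ⟨ha, f.injective hab ▸ hb⟩

theorem matchCount_le_of_embedding [Finite W] (f : V ↪ W)
    (hf : ∀ a b, G.Adj a b → H.Adj (f a) (f b)) (t : ℕ) : matchCount G t ≤ matchCount H t :=
  Set.ncard_le_ncard_of_injOn (mapVertices f)
    (fun _ hs => mapVertices_mem_matchings f hs fun a b hab => hf a b (adj_of_mem_matchings hs hab))
    (mapVertices_injective f).injOn (Set.toFinite _)

theorem matchCount_mono [Finite V] {G G' : SimpleGraph V} (h : G ≤ G') (t : ℕ) :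
    matchCount G t ≤ matchCount G' t :=
  matchCount_le_of_embedding (.refl V) (fun _ _ hab => h hab) t

theorem matchCount_eq_deleteEdges_add [Finite V] (G : SimpleGraph V) (e : Sym2 V) (t : ℕ) :
    matchCount G t =
      matchCount (G.deleteEdges {e}) t + {s ∈ matchings G t | e ∈ s}.ncard := by
  have hdelete : matchings (G.deleteEdges {e}) t = {s ∈ matchings G t | e ∉ s} := by
    ext s
    simp only [matchings, SimpleGraph.edgeSet_deleteEdges, Set.subset_sdiff,
      Set.disjoint_singleton_right, Finset.mem_coe, Set.mem_ofPred_eq]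
    tauto
  rw [matchCount_eq_ncard_matchings, matchCount_eq_ncard_matchings, hdelete, add_comm]
  exact (Set.ncard_inter_add_ncard_sdiff_eq_ncard (matchings G t) {s | e ∈ s}).symm

theorem matchCount_one (G : SimpleGraph V) : matchCount G 1 = G.edgeSet.ncard := by
  have himage : matchings G 1 = (fun e => {e}) '' G.edgeSet := by
    ext s
    simp only [matchings, Set.mem_ofPred_eq, Finset.card_eq_one, Set.mem_image]
    constructor
    · rintro ⟨hs, ⟨e, rfl⟩, -⟩
      exact ⟨e, hs (Finset.mem_coe.2 (Finset.mem_singleton_self e)), rfl⟩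
    · rintro ⟨e, he, rfl⟩
      simpa using he
  rw [matchCount_eq_ncard_matchings, himage,
    Set.ncard_image_of_injective _ Finset.singleton_injective]

end Matchings

section AttachVertex

variable {V W : Type*} {G : SimpleGraph V} {t : ℕ} {s : Finset (Sym2 V)} {c : W} {N : Finset W}

theorem attachVertex_adj {a b : W} :
    (attachVertex c N).Adj a b ↔ a ≠ b ∧ (a = c → b ∈ N) ∧ (b = c → a ∈ N) := Iff.rfl

theorem attachVertex_mono {N' : Finset W} (h : N ⊆ N') : attachVertex c N ≤ attachVertex c N' :=
  fun _ _ hab => ⟨hab.1, fun ha => h (hab.2.1 ha), fun hb => h (hab.2.2 hb)⟩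

theorem attachVertex_cons_deleteEdges {p : W} (hp : p ∉ N) :
    (attachVertex c (Finset.cons p N hp)).deleteEdges {s(p, c)} = attachVertex c N := by
  ext a b
  simp only [SimpleGraph.deleteEdges_adj, attachVertex_adj, Finset.mem_cons, Set.mem_singleton_iff,
    Sym2.eq_iff]
  grind

theorem mapVertices_mem_matchings_attachVertex (f : V ↪ W) (hs : s ∈ matchings G t) {q : V}
    (hq : f q = c) (hN : ∀ p, s(q, p) ∈ s → f p ∈ N) :
    mapVertices f s ∈ matchings (attachVertex c N) t := by
  refine mapVertices_mem_matchings f hs fun a b hab => ⟨?_, fun ha => ?_, fun hb => ?_⟩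
  · exact f.injective.ne (adj_of_mem_matchings hs hab).ne
  · obtain rfl : a = q := f.injective (ha.trans hq.symm)
    exact hN b hab
  · obtain rfl : b = q := f.injective (hb.trans hq.symm)
    exact hN a (Sym2.eq_swap ▸ hab)

end AttachVertex

section EdgeCut

variable {V : Type*} {G : SimpleGraph V} {S : Set V} {c : V} {N : Finset V}

theorem mk_mem_edgeCut {a b : V} (ha : a ∈ S) (hb : b ∉ S) (hab : G.Adj a b) :
    s(a, b) ∈ edgeCut G S :=
  ⟨hab, a, ha, b, hb, rfl⟩

theorem edgeCut_deleteEdges (G : SimpleGraph V) (S : Set V) (F : Set (Sym2 V)) :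
    edgeCut (G.deleteEdges F) S = edgeCut G S \ F := by
  ext e
  simp only [edgeCut, SimpleGraph.edgeSet_deleteEdges, Set.mem_ofPred_eq, Set.mem_sdiff]
  tauto

theorem exists_edgeCut_subset_singleton [Finite V] (hS : S.Nonempty) (hS' : Sᶜ.Nonempty)
    (hcut : (edgeCut G S).ncard ≤ 1) : ∃ u ∈ S, ∃ c ∉ S, edgeCut G S ⊆ {s(u, c)} := by
  obtain hempty | ⟨e, he⟩ := (edgeCut G S).eq_empty_or_nonempty
  · obtain ⟨u, hu⟩ := hS
    obtain ⟨c, hc⟩ := hS'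
    exact ⟨u, hu, c, hc, hempty ▸ Set.empty_subset _⟩
  · obtain ⟨-, u, hu, c, hc, rfl⟩ := id he
    exact ⟨u, hu, c, hc, fun e' he' => Set.ncard_le_one (Set.toFinite _) |>.1 hcut e' he' _ he⟩

theorem ncard_edgeCut_top (S : Set V) : (edgeCut ⊤ S).ncard = S.ncard * Sᶜ.ncard := by
  have himage : edgeCut ⊤ S = (fun p : V × V => s(p.1, p.2)) '' (S ×ˢ Sᶜ) := by
    ext e
    constructor
    · rintro ⟨-, u, hu, v, hv, rfl⟩
      exact ⟨(u, v), ⟨hu, hv⟩, rfl⟩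
    · rintro ⟨⟨u, v⟩, ⟨hu, hv⟩, rfl⟩
      exact mk_mem_edgeCut hu hv (fun h => hv (h ▸ hu))
  rw [himage, Set.InjOn.ncard_image, Set.ncard_prod]
  rintro ⟨a, b⟩ ⟨ha, -⟩ ⟨a', b'⟩ ⟨-, hb'⟩ h
  rcases Sym2.eq_iff.1 h with ⟨rfl, rfl⟩ | ⟨rfl, -⟩
  · rfl
  · exact absurd ha hb'

theorem ncard_edgeSet_add_ncard_mul_ncard_compl [Finite V] (G : SimpleGraph V) (S : Set V) :
    G.edgeSet.ncard + S.ncard * Sᶜ.ncard =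
      (G.edgeSet ∪ edgeCut ⊤ S).ncard + (edgeCut G S).ncard := by
  have hinter : G.edgeSet ∩ edgeCut ⊤ S = edgeCut G S :=
    Set.ext fun e => ⟨fun he => ⟨he.1, he.2.2⟩,
      fun he => ⟨he.1, SimpleGraph.edgeSet_mono le_top he.1, he.2⟩⟩
  rw [← ncard_edgeCut_top, ← hinter, Set.ncard_union_add_ncard_inter]

theorem ncard_edgeSet_top [Fintype V] :
    (⊤ : SimpleGraph V).edgeSet.ncard = (Fintype.card V).choose 2 := by
  classical
  rw [← SimpleGraph.card_edgeFinset_top_eq_card_choose_two, ← SimpleGraph.coe_edgeFinset,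
    Set.ncard_coe_finset]

theorem ncard_edgeSet_add_ncard_mul_ncard_compl_le [Fintype V] (G : SimpleGraph V) (S : Set V) :
    G.edgeSet.ncard + S.ncard * Sᶜ.ncard ≤ (Fintype.card V).choose 2 + (edgeCut G S).ncard := by
  have hunion : G.edgeSet ∪ edgeCut ⊤ S ⊆ (⊤ : SimpleGraph V).edgeSet :=
    Set.union_subset (SimpleGraph.edgeSet_mono le_top) fun _ he => he.1
  rw [ncard_edgeSet_add_ncard_mul_ncard_compl, ← ncard_edgeSet_top]
  exact Nat.add_le_add_right (Set.ncard_le_ncard hunion) _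

theorem ncard_edgeCut_attachVertex (hc : c ∉ N) :
    (edgeCut (attachVertex c N) {c}).ncard = N.card := by
  have himage : edgeCut (attachVertex c N) {c} = (fun v => s(c, v)) '' N := by
    ext e
    constructor
    · rintro ⟨he, _, rfl, v, -, rfl⟩
      exact ⟨v, he.2.1 rfl, rfl⟩
    · rintro ⟨v, hv, rfl⟩
      have hvc : v ≠ c := fun h => hc (h ▸ hv)
      exact mk_mem_edgeCut rfl hvc ⟨hvc.symm, fun _ => hv, fun h => absurd h hvc⟩
  rw [himage, Set.ncard_image_of_injective _ fun _ _ h => Sym2.congr_right.1 h,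
    Set.ncard_coe_finset]

theorem edgeSet_attachVertex_union_edgeCut_top (c : V) (N : Finset V) :
    (attachVertex c N).edgeSet ∪ edgeCut ⊤ {c} = (⊤ : SimpleGraph V).edgeSet := by
  refine (Set.union_subset (SimpleGraph.edgeSet_mono le_top) fun _ he => he.1).antisymm ?_
  intro e he
  induction e with
  | h a b =>
    by_cases ha : a = c
    · exact .inr (mk_mem_edgeCut ha (fun hb => he (ha.trans hb.symm)) he)
    by_cases hb : b = c
    · exact .inr (Sym2.eq_swap ▸ mk_mem_edgeCut hb (fun ha => he (ha.trans hb.symm)) he.symm)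
    exact .inl ⟨he, fun h => absurd h ha, fun h => absurd h hb⟩

theorem ncard_edgeSet_attachVertex_add [Fintype V] (hc : c ∉ N) :
    (attachVertex c N).edgeSet.ncard + (Fintype.card V - 1) =
      (Fintype.card V).choose 2 + N.card := by
  have hcompl : ({c}ᶜ : Set V).ncard = Fintype.card V - 1 := by
    rw [Set.ncard_compl, Set.ncard_singleton, Nat.card_eq_fintype_card]
  have hcount := ncard_edgeSet_add_ncard_mul_ncard_compl (attachVertex c N) {c}
  rwa [Set.ncard_singleton, one_mul, hcompl, edgeSet_attachVertex_union_edgeCut_top,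
    ncard_edgeSet_top, ncard_edgeCut_attachVertex hc] at hcount

end EdgeCut

section OneCutEdge

variable {V : Type*} {G : SimpleGraph V} {t : ℕ} {S : Set V} {a b u c w w' x : V}
  {s : Finset (Sym2 V)}

/-- `SwitchLabel S u c T w` says that the edge set `T` displays the label `w` of the transposition
`(u w)` that produced it from a matching with no edge between `S` and its complement other than
`uc`. In `switched`, the edges `cw` and `ux` have been replaced by `cu` and `wx`. -/
inductive SwitchLabel (S : Set V) (u c : V) (T : Finset (Sym2 V)) : V → Prop
  | unchanged (h : ∀ a ∈ S, ∀ b ∉ S, s(a, b) ∈ T → a = u ∧ b = c) : SwitchLabel S u c T u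
  | moved {b : V} (hb : b ∉ S) (hbc : b ≠ c) (hub : s(u, b) ∈ T) : SwitchLabel S u c T c
  | switched {x w : V} (hx : x ∈ S) (hxu : x ≠ u) (hw : w ∉ S) (hwc : w ≠ c) (huc : s(u, c) ∈ T)
      (hxw : s(x, w) ∈ T) : SwitchLabel S u c T w

theorem eq_and_eq_of_mem_matchings (hcut : edgeCut G S ⊆ {s(u, c)}) (hc : c ∉ S)
    (hs : s ∈ matchings G t) (ha : a ∈ S) (hb : b ∉ S) (hab : s(a, b) ∈ s) : a = u ∧ b = c := by
  rcases Sym2.eq_iff.1 (hcut (mk_mem_edgeCut ha hb (adj_of_mem_matchings hs hab))) with h | ⟨rfl, -⟩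
  · exact h
  · exact absurd ha hc

theorem switchLabel_mapVertices_swap [DecidableEq V] (hcut : edgeCut G S ⊆ {s(u, c)}) (hu : u ∈ S)
    (hc : c ∉ S) (hs : s ∈ matchings G t) (hwu : w ≠ u) (hwc : s(w, c) ∈ s) (hxu : s(x, u) ∈ s) :
    SwitchLabel S u c (mapVertices (Equiv.swap u w).toEmbedding s) w := by
  have hw : w ∉ S := fun h => hwu (eq_and_eq_of_mem_matchings hcut hc hs h hc hwc).1
  have hx : x ∈ S := by
    by_contra h
    obtain rfl : x = c := (eq_and_eq_of_mem_matchings hcut hc hs hu h (Sym2.eq_swap ▸ hxu)).2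
    exact hwu (eq_of_mem_matchings hs (Sym2.eq_swap ▸ hwc) hxu)
  have hxu_ne : x ≠ u := (adj_of_mem_matchings hs hxu).ne
  have hwc_ne : w ≠ c := (adj_of_mem_matchings hs hwc).ne
  have hcu_ne : c ≠ u := fun h => hc (h ▸ hu)
  have hxw_ne : x ≠ w := fun h => hw (h ▸ hx)
  refine .switched hx hxu_ne hw hwc_ne ?_ ?_
  · simpa [mk_mem_mapVertices_equiv, Equiv.swap_apply_of_ne_of_ne hcu_ne hwc_ne.symm] using hwc
  · simpa [mk_mem_mapVertices_equiv, Equiv.swap_apply_of_ne_of_ne hxu_ne hxw_ne] using hxu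

theorem exists_switchLabel_mapVertices_swap [DecidableEq V] (hcut : edgeCut G S ⊆ {s(u, c)})
    (hu : u ∈ S) (hc : c ∉ S) (hs : s ∈ matchings G t) :
    ∃ w, SwitchLabel S u c (mapVertices (Equiv.swap u w).toEmbedding s) w ∧
      mapVertices (Equiv.swap u w).toEmbedding s ∈ matchings (attachVertex c {u}) t := by
  by_cases hw : ∃ w, w ≠ u ∧ s(w, c) ∈ s
  · obtain ⟨w, hwu, hwc⟩ := hw
    have hwc_ne : w ≠ c := (adj_of_mem_matchings hs hwc).ne
    by_cases hx : ∃ x, s(x, u) ∈ s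
    · obtain ⟨x, hxu⟩ := hx
      have hfix : Equiv.swap u w c = c :=
        Equiv.swap_apply_of_ne_of_ne (fun h => hc (h ▸ hu)) hwc_ne.symm
      refine ⟨w, switchLabel_mapVertices_swap hcut hu hc hs hwu hwc hxu,
        mapVertices_mem_matchings_attachVertex _ hs hfix fun p hp => ?_⟩
      obtain rfl : p = w := eq_of_mem_matchings hs hp (Sym2.eq_swap ▸ hwc)
      simp
    · push Not at hx
      have hwS : w ∉ S := fun h => hwu (eq_and_eq_of_mem_matchings hcut hc hs h hc hwc).1
      refine ⟨c, .moved hwS hwc_ne ?_, ?_⟩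
      · rw [Sym2.eq_swap]
        simpa [mk_mem_mapVertices_equiv, Equiv.swap_apply_of_ne_of_ne hwu hwc_ne] using hwc
      · exact mapVertices_mem_matchings_attachVertex _ hs (Equiv.swap_apply_left u c)
          fun p hp => absurd (Sym2.eq_swap ▸ hp) (hx p)
  · push Not at hw
    refine ⟨u, .unchanged fun a ha b hb hab => ?_, ?_⟩
    · refine eq_and_eq_of_mem_matchings hcut hc hs ha hb ?_
      simpa using (mk_mem_mapVertices_equiv (Equiv.swap u u)).1 hab
    · refine mapVertices_mem_matchings_attachVertex _ hs (q := c) (by simp) fun p hp => ?_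
      have hpu : p = u := by
        by_contra h
        exact hw p h (Sym2.eq_swap ▸ hp)
      simp [hpu]

theorem SwitchLabel.unique [DecidableEq V] (hcut : edgeCut G S ⊆ {s(u, c)}) (hu : u ∈ S)
    (hc : c ∉ S) (hs : s ∈ matchings G t) {H : SimpleGraph V}
    (hT : mapVertices (Equiv.swap u w).toEmbedding s ∈ matchings H t)
    (h : SwitchLabel S u c (mapVertices (Equiv.swap u w).toEmbedding s) w)
    (h' : SwitchLabel S u c (mapVertices (Equiv.swap u w).toEmbedding s) w') : w = w' := by
  cases h with
  | unchanged h =>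
    cases h' with
    | unchanged => rfl
    | moved hb hbc hub => exact absurd (h _ hu _ hb hub).2 hbc
    | switched hx hxu hw _ _ hxw => exact absurd (h _ hx _ hw hxw).1 hxu
  | moved hb hbc hub =>
    cases h' with
    | unchanged h' => exact absurd (h' _ hu _ hb hub).2 hbc
    | moved => rfl
    | switched _ _ _ _ huc => exact absurd (eq_of_mem_matchings hT hub huc) hbc
  | switched hx hxu hw _ huc hxw =>
    cases h' with
    | unchanged h' => exact absurd (h' _ hx _ hw hxw).1 hxu
    | moved hb hbc hub => exact absurd (eq_of_mem_matchings hT hub huc) hbc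
    | @switched x' w' hx' hxu' hw' _ _ hxw' =>
      by_contra hne
      have hx'w : x' ≠ w := fun h => hw (h ▸ hx')
      have hw'u : w' ≠ u := fun h => hw' (h ▸ hu)
      have hmem : s(x', w') ∈ s := by
        simpa [mk_mem_mapVertices_equiv, Equiv.swap_apply_of_ne_of_ne hxu' hx'w,
          Equiv.swap_apply_of_ne_of_ne hw'u (Ne.symm hne)] using hxw'
      exact hxu' (eq_and_eq_of_mem_matchings hcut hc hs hx' hw' hmem).1

theorem matchCount_le_of_edgeCut_subset_singleton [Finite V] (hcut : edgeCut G S ⊆ {s(u, c)})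
    (hu : u ∈ S) (hc : c ∉ S) (t : ℕ) : matchCount G t ≤ matchCount (attachVertex c {u}) t := by
  classical
  have : Nonempty V := ⟨u⟩
  choose! w hlabel hmem using fun s (hs : s ∈ matchings G t) =>
    exists_switchLabel_mapVertices_swap hcut hu hc hs
  refine Set.ncard_le_ncard_of_injOn (fun s => mapVertices (Equiv.swap u (w s)).toEmbedding s)
    hmem ?_ (Set.toFinite _)
  intro s hs s' hs' (heq : mapVertices _ s = mapVertices _ s')
  have hw : w s = w s' := (hlabel s hs).unique hcut hu hc hs (hmem s hs) (heq ▸ hlabel s' hs')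
  exact mapVertices_injective _ (hw ▸ heq)

end OneCutEdge

section Comparison

variable {V W : Type*} [Fintype V] [Fintype W] {G : SimpleGraph V} {S : Set V} {c : W}
  {N : Finset W}

theorem exists_embedding_apply_eq_apply_eq (hcard : Fintype.card V ≤ Fintype.card W) {a b : V}
    (hab : a ≠ b) {a' b' : W} (hab' : a' ≠ b') : ∃ f : V ↪ W, f a = a' ∧ f b = b' := by
  classical
  obtain ⟨f⟩ := Function.Embedding.nonempty_of_card_le hcard
  let g := f.trans (Equiv.swap (f a) a').toEmbedding
  have hga : g a = a' := Equiv.swap_apply_left _ _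
  refine ⟨g.trans (Equiv.swap (g b) b').toEmbedding, ?_, Equiv.swap_apply_left _ _⟩
  have hne : a' ≠ g b := hga ▸ g.injective.ne hab
  simp [hga, Equiv.swap_apply_of_ne_of_ne hne hab']

theorem matchCount_attachVertex_singleton_le (hcard : Fintype.card V ≤ Fintype.card W) {u v : V}
    (huv : u ≠ v) {u' v' : W} (huv' : u' ≠ v') (t : ℕ) :
    matchCount (attachVertex v {u}) t ≤ matchCount (attachVertex v' {u'}) t := by
  obtain ⟨f, rfl, rfl⟩ := exists_embedding_apply_eq_apply_eq hcard huv huv'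
  refine matchCount_le_of_embedding f (fun a b hab => ?_) t
  simpa [attachVertex_adj] using hab

theorem ncard_matchings_mem_le (hcard : Fintype.card V ≤ Fintype.card W) {p q : V} (hpq : p ≠ q)
    {p' : W} (hp' : p' ∈ N) (hc : c ∉ N) (t : ℕ) :
    {s ∈ matchings G t | s(p, q) ∈ s}.ncard ≤
      {s ∈ matchings (attachVertex c N) t | s(p', c) ∈ s}.ncard := by
  obtain ⟨f, rfl, rfl⟩ :=
    exists_embedding_apply_eq_apply_eq hcard hpq (ne_of_mem_of_not_mem hp' hc)
  refine Set.ncard_le_ncard_of_injOn (mapVertices f) ?_ (mapVertices_injective f).injOn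
    (Set.toFinite _)
  rintro s ⟨hs, hmem⟩
  refine ⟨mapVertices_mem_matchings_attachVertex f hs rfl fun r hr => ?_,
    (mk_mem_mapVertices f).2 hmem⟩
  rwa [eq_of_mem_matchings hs hr (Sym2.eq_swap ▸ hmem)]

theorem matchCount_le_attachVertex (hcard : Fintype.card V ≤ Fintype.card W) (hS : S.Nonempty)
    (hS' : Sᶜ.Nonempty) (hN : N.Nonempty) (hc : c ∉ N) (hcut : (edgeCut G S).ncard ≤ N.card)
    (t : ℕ) : matchCount G t ≤ matchCount (attachVertex c N) t := by
  induction hN using Finset.Nonempty.cons_induction generalizing G with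
  | singleton u' =>
    obtain ⟨u, hu, v, hv, hsub⟩ := exists_edgeCut_subset_singleton hS hS' (by simpa using hcut)
    exact (matchCount_le_of_edgeCut_subset_singleton hsub hu hv t).trans
      (matchCount_attachVertex_singleton_le hcard (ne_of_mem_of_not_mem hu hv)
        (ne_of_mem_of_not_mem (Finset.mem_singleton_self u') hc) t)
  | cons p' N hp' _ ih =>
    have hcN : c ∉ N := fun h => hc (Finset.mem_cons_of_mem h)
    obtain hempty | ⟨e, he⟩ := (edgeCut G S).eq_empty_or_nonempty
    · exact (ih hcN (by simp [hempty])).trans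
        (matchCount_mono (attachVertex_mono (Finset.subset_cons hp')) t)
    obtain ⟨hpq, p, -, q, -, rfl⟩ := id he
    have hdelete : (edgeCut (G.deleteEdges {s(p, q)}) S).ncard ≤ N.card := by
      rw [edgeCut_deleteEdges, Set.ncard_sdiff_singleton_of_mem he]
      rw [Finset.card_cons] at hcut
      lia
    rw [matchCount_eq_deleteEdges_add G s(p, q),
      matchCount_eq_deleteEdges_add (attachVertex c _) s(p', c), attachVertex_cons_deleteEdges]
    exact add_le_add (ih hcN hdelete)
      (ncard_matchings_mem_le hcard (G.ne_of_adj hpq) (Finset.mem_cons_self p' N) hc t)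

theorem matchCount_one_lt_attachVertex (hcard : Fintype.card V = Fintype.card W)
    (hS : S.Nontrivial) (hS' : Sᶜ.Nontrivial) (hc : c ∉ N)
    (hcut : (edgeCut G S).ncard ≤ N.card) :
    matchCount G 1 < matchCount (attachVertex c N) 1 := by
  have hproduct : Fintype.card V - 1 < S.ncard * Sᶜ.ncard := by
    have hsum := Set.ncard_add_ncard_compl S
    rw [Nat.card_eq_fintype_card] at hsum
    have := Set.one_lt_ncard_iff_nontrivial.2 hS
    have := Set.one_lt_ncard_iff_nontrivial.2 hS'
    have : S.ncard + Sᶜ.ncard ≤ S.ncard * Sᶜ.ncard := Nat.add_le_mul ‹_› ‹_›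
    lia
  have hG := ncard_edgeSet_add_ncard_mul_ncard_compl_le G S
  have hH := ncard_edgeSet_attachVertex_add hc
  rw [← hcard] at hH
  rw [matchCount_one, matchCount_one]
  lia

end Comparison

theorem Kstar_eq_attachVertex {n k : ℕ} (hn : 0 < n) :
    Kstar n k = attachVertex ⟨n - 1, Nat.sub_one_lt_of_lt hn⟩ {v : Fin n | v.val < k} := by
  ext a b
  simp only [Kstar, SimpleGraph.fromRel_adj, attachVertex_adj, Fin.ext_iff, ne_eq,
    Finset.mem_filter_univ]
  lia

theorem ncard_edgeCut_Kmk_le {n m k : ℕ} (hkm : k ≤ m) (hmn : m ≤ n) :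
    (edgeCut (Kmk n m k) {v | v.val < n - m}).ncard ≤ k := by
  let crossing (i : Fin k) : Sym2 (Fin n) := s(⟨i, by lia⟩, ⟨n - m + i, by lia⟩)
  have hsub : edgeCut (Kmk n m k) {v | v.val < n - m} ⊆ Set.range crossing := by
    rintro _ ⟨hadj, u, hu, v, hv, rfl⟩
    simp only [Kmk, SimpleGraph.mem_edgeSet, SimpleGraph.fromRel_adj,
      Set.mem_ofPred_eq] at hadj hu hv
    have huv : u.val < k ∧ v.val = n - m + u.val := by lia
    refine ⟨⟨u, huv.1⟩, ?_⟩
    simp only [crossing, ← huv.2]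
  calc (edgeCut (Kmk n m k) {v | v.val < n - m}).ncard
      ≤ Nat.card (Set.range crossing) := Set.ncard_le_ncard hsub
    _ ≤ Nat.card (Fin k) := Finite.card_range_le crossing
    _ = k := Nat.card_fin k

theorem stmt16_general {V : Type*} [Fintype V] {n k : ℕ} (hn : Fintype.card V = n)
    (G : SimpleGraph V) {S : Set V} (hS : S.Nontrivial) (hS' : Sᶜ.Nontrivial) (hk : 1 ≤ k)
    (hkn : k < n) (hcut : (edgeCut G S).ncard ≤ k) :
    (∀ t, matchCount G t ≤ matchCount (Kstar n k) t) ∧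
      matchCount G 1 < matchCount (Kstar n k) 1 := by
  have hpos : 0 < n := by lia
  have hcard : Fintype.card V = Fintype.card (Fin n) := by rw [hn, Fintype.card_fin]
  let c : Fin n := ⟨n - 1, Nat.sub_one_lt_of_lt hpos⟩
  let N : Finset (Fin n) := {v | v.val < k}
  have hN : N.card = k := by rw [Fin.card_filter_val_lt, min_eq_right hkn.le]
  have hc : c ∉ N := by
    rw [Finset.mem_filter_univ]
    exact Nat.not_lt.2 (Nat.le_sub_one_of_lt hkn)
  rw [← hN] at hk hcut
  rw [Kstar_eq_attachVertex hpos]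
  exact ⟨matchCount_le_attachVertex hcard.le hS.nonempty hS'.nonempty
      (Finset.card_pos.1 hk) hc hcut,
    matchCount_one_lt_attachVertex hcard hS hS' hc hcut⟩

theorem nontrivial_val_lt {n l : ℕ} (hl : 2 ≤ l) (hln : l ≤ n) :
    {v : Fin n | v.val < l}.Nontrivial :=
  ⟨⟨0, by lia⟩, show 0 < l by lia, ⟨1, by lia⟩, show 1 < l by lia, by simp⟩

theorem nontrivial_compl_val_lt {n l : ℕ} (hl : l + 2 ≤ n) :
    {v : Fin n | v.val < l}ᶜ.Nontrivial :=
  ⟨⟨l, by lia⟩, show ¬l < l by lia, ⟨l + 1, by lia⟩, show ¬l + 1 < l by lia, by simp⟩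

/-- For `max{k,2} ≤ m ≤ ⌊n/2⌋` and `k ≥ 1`: `m(K^k_{n-m,m},t) ≤ m(K^k_{n-1,1},t)` for all
`t ≤ ⌊n/2⌋` and `m(K^k_{n-m,m},1) < m(K^k_{n-1,1},1)`, i.e. `K^k_{n-m,m} ≺ K^k_{n-1,1}`. -/
theorem stmt16 (n m k : ℕ) (hk : 1 ≤ k) (hm1 : max k 2 ≤ m) (hm2 : m ≤ n / 2) :
    (∀ t : ℕ, t ≤ n / 2 → matchCount (Kmk n m k) t ≤ matchCount (Kstar n k) t) ∧
    matchCount (Kmk n m k) 1 < matchCount (Kstar n k) 1 := by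
  have hkm : k ≤ m := (le_max_left k 2).trans hm1
  have hm : 2 ≤ m := (le_max_right k 2).trans hm1
  obtain ⟨hle, hlt⟩ := stmt16_general (Fintype.card_fin n) (Kmk n m k)
    (nontrivial_val_lt (by lia) (Nat.sub_le n m)) (nontrivial_compl_val_lt (by lia)) hk (by lia)
    (ncard_edgeCut_Kmk_le hkm (by lia))
  exact ⟨fun t _ => hle t, hlt⟩
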